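/- Fix a natural number n ≥ 4 and define F(γ) = [4 + 2nγ/(1-γ)] / [1 + (1-γ)^{-2} + 2(1-γ)^{-(n-1)}]. Then F(γ) = 1 - ((n² - 3n + 3)/4)·γ² + O(γ³) as γ → 0⁺. -/

import Mathlib

/-!
Writing the fidelity as `N / D` and the claimed quadratic as `q`, we have
`N / D - q = (N - q * D) / D`, where the denominator `D` tends to `4`. So it suffices to expand
`N` and `D` to second order by binomial series and to check that the polynomial identity
`N ≡ q * D` holds modulo `γ ^ 3`.
-/

open Asymptotics Filter Topology

lemma isBigO_sub_sum_range_of_hasFPowerSeriesAt_ofScalars {𝕜 : Type*}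
    [NontriviallyNormedField 𝕜] {c : ℕ → 𝕜} {f : 𝕜 → 𝕜}
    (hf : HasFPowerSeriesAt f (.ofScalars 𝕜 c) 0) (m : ℕ) :
    (fun x => f x - ∑ k ∈ Finset.range m, c k * x ^ k) =O[𝓝 0] fun x => x ^ m := by
  have taylor := hf.isBigO_sub_partialSum_pow m
  simp only [zero_add, FormalMultilinearSeries.partialSum,
    FormalMultilinearSeries.ofScalars_apply_eq, smul_eq_mul, ← norm_pow] at taylor
  exact taylor.of_norm_right

lemma isBigO_div_sub_of_isBigO_sub_mul {α 𝕜 : Type*} [NormedField 𝕜] {l : Filter α}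
    {N D N₀ D₀ q g : α → 𝕜} {d : 𝕜}
    (hN : (fun x => N x - N₀ x) =O[l] g) (hD : (fun x => D x - D₀ x) =O[l] g)
    (hq : q =O[l] fun _ => (1 : 𝕜)) (hND : (fun x => N₀ x - q x * D₀ x) =O[l] g)
    (hd : Tendsto D l (𝓝 d)) (hd0 : d ≠ 0) :
    (fun x => N x / D x - q x) =O[l] g := by
  have hqD : (fun x => q x * (D x - D₀ x)) =O[l] g := by
    simpa only [one_mul] using hq.mul hD
  have hinv : (fun x => (D x)⁻¹) =O[l] fun _ => (1 : 𝕜) := (hd.inv₀ hd0).isBigO_one 𝕜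
  refine (((hN.sub hqD).add hND).mul hinv).congr' ?_ (.of_forall fun x => mul_one (g x))
  filter_upwards [hd.eventually_ne hd0] with x hx
  field_simp
  ring

lemma exists_norm_le_mul_norm_of_isBigO_nhdsGT {E F : Type*} [Norm E] [SeminormedAddCommGroup F]
    {f : ℝ → E} {g : ℝ → F} {a b : ℝ} (hab : a < b) (h : f =O[𝓝[>] a] g) :
    ∃ C : ℝ, 0 < C ∧ ∃ δ : ℝ, a < δ ∧ δ < b ∧ ∀ x, a < x → x < δ → ‖f x‖ ≤ C * ‖g x‖ := by
  obtain ⟨C, hC, hbound⟩ := h.exists_pos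
  obtain ⟨u, hu, hIoo⟩ := (nhdsGT_basis a).eventually_iff.mp hbound.bound
  obtain ⟨δ, haδ, hδ⟩ := exists_between (lt_min hu hab)
  exact ⟨C, hC, δ, haδ, hδ.trans_le (min_le_right _ _), fun x hax hxδ =>
    hIoo ⟨hax, hxδ.trans (hδ.trans_le (min_le_left _ _))⟩⟩

lemma ringChoose_two_right {R : Type*} [Field R] [CharZero R] (r : R) :
    Ring.choose r 2 = r * (r - 1) / 2 := by
  simp [Ring.choose_eq_smul, descPochhammer_succ_right, Polynomial.smeval_mul,
    Polynomial.smeval_sub, inv_mul_eq_div]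

lemma one_sub_rpow_neg_sub_quadratic_isBigO (a : ℝ) :
    (fun x : ℝ => (1 - x) ^ (-a) - (1 + a * x + a * (a + 1) / 2 * x ^ 2)) =O[𝓝 0]
      fun x => x ^ 3 := by
  have hchoose : Ring.choose (a + 1) 2 = a * (a + 1) / 2 := by
    rw [ringChoose_two_right, add_sub_cancel_right, mul_comm]
  have hseries := isBigO_sub_sum_range_of_hasFPowerSeriesAt_ofScalars
    (Real.one_div_one_sub_rpow_hasFPowerSeriesOnBall_zero a).hasFPowerSeriesAt 3
  refine hseries.congr' ?_ .rfl
  filter_upwards [eventually_lt_nhds zero_lt_one] with x hx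
  rw [Real.rpow_neg (sub_nonneg.mpr hx.le), ← one_div]
  norm_num [Finset.sum_range_succ, add_sub_assoc, hchoose]

lemma fidelity_numerator_sub_quadratic_isBigO (n : ℝ) :
    (fun γ : ℝ => 4 + 2 * n * γ / (1 - γ) - (4 + 2 * n * γ + 2 * n * γ ^ 2)) =O[𝓝 0]
      fun γ => γ ^ 3 := by
  have hgeom := isBigO_sub_sum_range_of_hasFPowerSeriesAt_ofScalars
    Real.one_div_one_sub_hasFPowerSeriesOnBall_zero.hasFPowerSeriesAt 2
  refine ((isBigO_const_mul_self (2 * n) (fun γ : ℝ => γ) (𝓝 0)).mul hgeom).congr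
    (fun γ => ?_) fun γ => by ring
  simp only [Finset.sum_range_succ, Finset.sum_range_zero, Pi.one_apply]
  ring

/-- The squared normalization `m(γ)⁻¹` of the codeword built from the all-zero bit string, whose
basis states have weights `0`, `2`, `n - 1`, `n - 1`; the number of qubits `n` may be any real. -/
noncomputable def codewordNormSq (n γ : ℝ) : ℝ :=
  1 + (1 - γ) ^ (-2 : ℤ) + 2 * (1 - γ) ^ (-(n - 1))

lemma codewordNormSq_sub_quadratic_isBigO (n : ℝ) :
    (fun γ => codewordNormSq n γ - (4 + 2 * n * γ + (n ^ 2 - n + 3) * γ ^ 2)) =O[𝓝 0]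
      fun γ => γ ^ 3 := by
  have hsq := one_sub_rpow_neg_sub_quadratic_isBigO 2
  have hpow := one_sub_rpow_neg_sub_quadratic_isBigO (n - 1)
  refine (hsq.add (hpow.const_mul_left 2)).congr_left fun γ => ?_
  have hzpow : (1 - γ) ^ (-2 : ℝ) = (1 - γ) ^ (-2 : ℤ) := mod_cast Real.rpow_intCast (1 - γ) (-2)
  rw [hzpow, codewordNormSq]
  ring

lemma tendsto_codewordNormSq (n : ℝ) : Tendsto (codewordNormSq n) (𝓝 0) (𝓝 4) := by
  have hcont : ContinuousAt (codewordNormSq n) 0 := by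
    unfold codewordNormSq
    fun_prop (disch := norm_num)
  have hzero : codewordNormSq n 0 = 4 := by norm_num [codewordNormSq]
  exact hzero ▸ hcont.tendsto

theorem stmt_17_general (n : ℝ) :
    (fun γ : ℝ => (4 + 2 * n * γ / (1 - γ))
        / (1 + (1 - γ) ^ (-2 : ℤ) + 2 * (1 - γ) ^ (-(n - 1)))
      - (1 - (n ^ 2 - 3 * n + 3) / 4 * γ ^ 2)) =O[𝓝 0] fun γ => γ ^ 3 := by
  set c := (n ^ 2 - 3 * n + 3) / 4 with hc
  have hquad : (fun γ : ℝ => 1 - c * γ ^ 2) =O[𝓝 0] fun _ => (1 : ℝ) :=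
    (Continuous.tendsto (by fun_prop) 0).isBigO_one ℝ
  have hcofactor : (fun γ : ℝ => 2 * n * c + c * (n ^ 2 - n + 3) * γ) =O[𝓝 0] fun _ => (1 : ℝ) :=
    (Continuous.tendsto (by fun_prop) 0).isBigO_one ℝ
  refine isBigO_div_sub_of_isBigO_sub_mul (fidelity_numerator_sub_quadratic_isBigO n)
    (codewordNormSq_sub_quadratic_isBigO n) hquad ?_
    (tendsto_codewordNormSq n) four_ne_zero
  refine (hcofactor.mul (isBigO_refl (fun γ : ℝ => γ ^ 3) (𝓝 0))).congr
    (fun γ => ?_) fun γ => one_mul _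
  rw [hc]
  ring

/-- Worst-case fidelity of the ((n,k)) pair-complementary NSA AD code:
`F(γ) = [4 + 2nγ/(1-γ)] / [1 + (1-γ)^{-2} + 2(1-γ)^{-(n-1)}]
      = 1 - ((n²-3n+3)/4)γ² + O(γ³)` as `γ → 0⁺`. -/
theorem stmt_17 (n : ℕ) (hn : 4 ≤ n) :
    ∃ C : ℝ, 0 < C ∧ ∃ δ : ℝ, 0 < δ ∧ δ < 1 ∧
      ∀ γ : ℝ, 0 < γ → γ < δ →
        |(4 + 2 * (n : ℝ) * γ / (1 - γ))
            / (1 + (1 - γ) ^ (-2 : ℤ) + 2 * (1 - γ) ^ (-((n : ℤ) - 1)))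
          - (1 - ((n : ℝ) ^ 2 - 3 * (n : ℝ) + 3) / 4 * γ ^ 2)| ≤ C * γ ^ 3 := by
  obtain ⟨C, hC, δ, hδ, hδ1, hbound⟩ := exists_norm_le_mul_norm_of_isBigO_nhdsGT zero_lt_one
    ((stmt_17_general n).mono nhdsWithin_le_nhds)
  exact ⟨C, hC, δ, hδ, hδ1, fun γ hγ hγδ => by
    simpa only [← Real.rpow_intCast, Int.cast_neg, Int.cast_sub, Int.cast_natCast, Int.cast_one,
      Real.norm_eq_abs, abs_of_pos (pow_pos hγ 3)] using hbound γ hγ hγδ⟩
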